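/- arXiv:2408.10109 — 4 statements merged into one kernel-verified Lean document; each statement's English description precedes it below -/
import Mathlib

section
/- Let W, ΔW, U ∈ ℝ^{m×s} and let R ∈ ℝ^{s×s} be nonsingular. Assume W + ΔW = U·R and ‖ΔW‖ < σ_min(W). Then ‖R⁻¹‖ ≤ ‖U‖ / (σ_min(W) − ‖ΔW‖). -/
open scoped Matrix

/-- The spectral norm (`ℓ²→ℓ²` operator norm) of a real matrix. -/
noncomputable def specNorm {m n : Type*} [Fintype m] [Fintype n] [DecidableEq n]
    (A : Matrix m n ℝ) : ℝ :=
  ‖LinearMap.toContinuousLinearMap (Matrix.toEuclideanLin A)‖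

/-- The smallest singular value of a real matrix: the infimum of `‖A x‖₂` over
unit vectors `x`. -/
noncomputable def sigmaMin {m n : Type*} [Fintype m] [Fintype n] [DecidableEq n]
    (A : Matrix m n ℝ) : ℝ :=
  sInf ((fun x : EuclideanSpace ℝ n => ‖Matrix.toEuclideanLin A x‖) ''
    {x : EuclideanSpace ℝ n | ‖x‖ = 1})

/-- The 2-norm condition number `κ(A) = ‖A‖ / σ_min(A)`. -/
noncomputable def condNum {m n : Type*} [Fintype m] [Fintype n] [DecidableEq n]
    (A : Matrix m n ℝ) : ℝ :=
  specNorm A / sigmaMin A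

theorem sigmaMin_mul_norm_le {m s : ℕ} (W : Matrix (Fin m) (Fin s) ℝ)
    (x : EuclideanSpace ℝ (Fin s)) :
    sigmaMin W * ‖x‖ ≤ ‖Matrix.toEuclideanLin W x‖ := by
  by_cases hx : x = 0
  · simp [hx]
  have hpos : 0 < ‖x‖ := norm_pos_iff.mpr hx
  have h : sigmaMin W ≤ ‖Matrix.toEuclideanLin W (‖x‖⁻¹ • x)‖ := by
    apply csInf_le
    · refine ⟨0, ?_⟩
      rintro _ ⟨y, _, rfl⟩
      exact norm_nonneg _
    · refine ⟨‖x‖⁻¹ • x, ?_, rfl⟩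
      simp [norm_smul, hpos.ne']
  rw [map_smul, norm_smul, norm_inv, norm_norm] at h
  calc sigmaMin W * ‖x‖ ≤ (‖x‖⁻¹ * ‖Matrix.toEuclideanLin W x‖) * ‖x‖ := by gcongr
    _ = _ := by field_simp

theorem norm_le_specNorm {m s : ℕ} (A : Matrix (Fin m) (Fin s) ℝ)
    (x : EuclideanSpace ℝ (Fin s)) :
    ‖Matrix.toEuclideanLin A x‖ ≤ specNorm A * ‖x‖ :=
  (LinearMap.toContinuousLinearMap (Matrix.toEuclideanLin A)).le_opNorm x

theorem stmt_0 (m s : ℕ)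
    (W ΔW U : Matrix (Fin m) (Fin s) ℝ)
    (R : Matrix (Fin s) (Fin s) ℝ) (hR : IsUnit R.det)
    (hWR : W + ΔW = U * R)
    (hΔW : specNorm ΔW < sigmaMin W) :
    specNorm R⁻¹ ≤ specNorm U / (sigmaMin W - specNorm ΔW) := by
  have hd : 0 < sigmaMin W - specNorm ΔW := sub_pos.mpr hΔW
  have hU0 : 0 ≤ specNorm U := norm_nonneg _
  refine ContinuousLinearMap.opNorm_le_bound _ (div_nonneg hU0 hd.le) fun y => ?_
  change ‖Matrix.toEuclideanLin R⁻¹ y‖ ≤ _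
  set x := Matrix.toEuclideanLin R⁻¹ y with hx
  have key : Matrix.toEuclideanLin W x + Matrix.toEuclideanLin ΔW x
      = Matrix.toEuclideanLin U y := by
    rw [← LinearMap.add_apply, ← map_add, hWR, hx]
    simp [Matrix.toLpLin_apply, Matrix.mulVec_mulVec, Matrix.mul_assoc,
      Matrix.mul_nonsing_inv _ hR]
  have h1 := sigmaMin_mul_norm_le W x
  have h2 := norm_le_specNorm ΔW x
  have h3 := norm_le_specNorm U y
  rw [← key] at h3
  have h4 := norm_sub_le (Matrix.toEuclideanLin W x + Matrix.toEuclideanLin ΔW x)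
    (Matrix.toEuclideanLin ΔW x)
  rw [add_sub_cancel_right] at h4
  rw [div_mul_eq_mul_div, le_div_iff₀ hd]
  linarith
end

section
/- Let Q ∈ ℝ^{m×r} and ω ≥ 0 satisfy ‖I − QᵀQ‖ ≤ ω, and let X ∈ ℝ^{m×s}. Define Ṽ = (I − QQᵀ)X. Then ṼᵀQ(I − QᵀQ)QᵀṼ = XᵀQ(I − QᵀQ)³QᵀX, and ‖ṼᵀQ(I − QᵀQ)QᵀṼ‖ ≤ (1+ω)²·ω³·‖X‖². -/
open scoped Matrix

section helpers
open scoped Matrix.Norms.L2Operator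

theorem specNorm_eq_l2 {m n : Type*} [Fintype m] [Fintype n] [DecidableEq n]
    (A : Matrix m n ℝ) : specNorm A = ‖A‖ := by
  rw [Matrix.l2_opNorm_def]; rfl

theorem specNorm_mul_le {l m n : Type*} [Fintype l] [Fintype m] [Fintype n] [DecidableEq m]
    [DecidableEq n] (A : Matrix l m ℝ) (B : Matrix m n ℝ) :
    specNorm (A * B) ≤ specNorm A * specNorm B := by
  simp only [specNorm_eq_l2]; exact Matrix.l2_opNorm_mul A B

theorem specNorm_transpose' {m n : Type*} [Fintype m] [Fintype n] [DecidableEq m]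
    [DecidableEq n] (A : Matrix m n ℝ) : specNorm Aᵀ = specNorm A := by
  simp only [specNorm_eq_l2]
  rw [← Matrix.conjTranspose_eq_transpose_of_trivial, Matrix.l2_opNorm_conjTranspose]

theorem specNorm_nonneg' {m n : Type*} [Fintype m] [Fintype n] [DecidableEq n]
    (A : Matrix m n ℝ) : 0 ≤ specNorm A := norm_nonneg _

theorem specNorm_one_le {n : Type*} [Fintype n] [DecidableEq n] :
    specNorm (1 : Matrix n n ℝ) ≤ 1 := by
  have h : LinearMap.toContinuousLinearMap (Matrix.toEuclideanLin (1 : Matrix n n ℝ)) =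
      ContinuousLinearMap.id ℝ (EuclideanSpace ℝ n) := by
    ext x i
    simp
  rw [specNorm, h]
  exact ContinuousLinearMap.norm_id_le

theorem specNorm_sq_le {m n : Type*} [Fintype m] [Fintype n] [DecidableEq m] [DecidableEq n]
    (Q : Matrix m n ℝ) (ω : ℝ) (h : specNorm (1 - Qᵀ * Q) ≤ ω) :
    specNorm Q * specNorm Q ≤ 1 + ω := by
  have h1 := specNorm_one_le (n := n)
  simp only [specNorm_eq_l2] at *
  rw [← Matrix.l2_opNorm_conjTranspose_mul_self, Matrix.conjTranspose_eq_transpose_of_trivial]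
  have h2 : Qᵀ * Q = 1 - (1 - Qᵀ * Q) := by abel
  rw [h2]
  exact (norm_sub_le _ _).trans (add_le_add h1 h)

end helpers

theorem stmt_8 (m r s : ℕ)
    (Q : Matrix (Fin m) (Fin r) ℝ) (ω : ℝ) (hω : 0 ≤ ω)
    (hQ : specNorm (1 - Qᵀ * Q) ≤ ω)
    (X : Matrix (Fin m) (Fin s) ℝ) :
    (((1 - Q * Qᵀ) * X)ᵀ * (Q * ((1 - Qᵀ * Q) * (Qᵀ * ((1 - Q * Qᵀ) * X)))) =
      Xᵀ * (Q * ((1 - Qᵀ * Q) ^ 3 * (Qᵀ * X)))) ∧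
    specNorm (((1 - Q * Qᵀ) * X)ᵀ *
        (Q * ((1 - Qᵀ * Q) * (Qᵀ * ((1 - Q * Qᵀ) * X))))) ≤
      (1 + ω) ^ 2 * ω ^ 3 * specNorm X ^ 2 := by
  have e1 : Qᵀ * (1 - Q * Qᵀ) = (1 - Qᵀ * Q) * Qᵀ := by
    simp only [Matrix.mul_sub, Matrix.sub_mul, Matrix.mul_one, Matrix.one_mul, Matrix.mul_assoc]
  have e2 : (1 - Q * Qᵀ) * Q = Q * (1 - Qᵀ * Q) := by
    simp only [Matrix.mul_sub, Matrix.sub_mul, Matrix.mul_one, Matrix.one_mul, Matrix.mul_assoc]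
  have e3 : (1 - Q * Qᵀ)ᵀ = 1 - Q * Qᵀ := by simp
  have key : ((1 - Q * Qᵀ) * X)ᵀ * (Q * ((1 - Qᵀ * Q) * (Qᵀ * ((1 - Q * Qᵀ) * X)))) =
      Xᵀ * (Q * ((1 - Qᵀ * Q) ^ 3 * (Qᵀ * X))) := by
    rw [Matrix.transpose_mul, e3, ← Matrix.mul_assoc Qᵀ, e1, Matrix.mul_assoc Xᵀ,
      ← Matrix.mul_assoc (1 - Q * Qᵀ) Q, e2]
    generalize 1 - Qᵀ * Q = E
    simp only [pow_succ, pow_zero, Matrix.one_mul, Matrix.mul_assoc]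
  refine ⟨key, ?_⟩
  rw [key]
  have hq := specNorm_sq_le Q ω hQ
  have hE3 : specNorm ((1 - Qᵀ * Q) ^ 3) ≤ ω ^ 3 := by
    have hn := specNorm_nonneg' (1 - Qᵀ * Q)
    calc specNorm ((1 - Qᵀ * Q) ^ 3)
        ≤ specNorm (1 - Qᵀ * Q) * specNorm (1 - Qᵀ * Q) * specNorm (1 - Qᵀ * Q) := by
          rw [pow_succ, pow_two]
          exact (specNorm_mul_le _ _).trans
            (mul_le_mul_of_nonneg_right (specNorm_mul_le _ _) hn)
      _ = specNorm (1 - Qᵀ * Q) ^ 3 := by ring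
      _ ≤ ω ^ 3 := pow_le_pow_left₀ hn hQ 3
  have hX := specNorm_nonneg' X
  have hQ0 := specNorm_nonneg' Q
  have hω3 : 0 ≤ ω ^ 3 := pow_nonneg hω 3
  calc specNorm (Xᵀ * (Q * ((1 - Qᵀ * Q) ^ 3 * (Qᵀ * X))))
      ≤ specNorm X * (specNorm Q * (ω ^ 3 * (specNorm Q * specNorm X))) := by
        refine (specNorm_mul_le _ _).trans ?_
        rw [specNorm_transpose']
        refine mul_le_mul_of_nonneg_left ((specNorm_mul_le _ _).trans ?_) hX
        refine mul_le_mul_of_nonneg_left ((specNorm_mul_le _ _).trans ?_) hQ0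
        refine mul_le_mul hE3 ((specNorm_mul_le _ _).trans ?_) (specNorm_nonneg' _) hω3
        rw [specNorm_transpose']
    _ = (specNorm Q * specNorm Q) * (ω ^ 3 * specNorm X ^ 2) := by ring
    _ ≤ (1 + ω) ^ 2 * (ω ^ 3 * specNorm X ^ 2) := by
        refine mul_le_mul_of_nonneg_right (hq.trans ?_) (by positivity)
        nlinarith
    _ = (1 + ω) ^ 2 * ω ^ 3 * specNorm X ^ 2 := by ring
end

section
/- Let Q ∈ ℝ^{m×r} and ω ≥ 0 satisfy ‖I − QᵀQ‖ ≤ ω, let X, ΔV, ΔH ∈ ℝ^{m×s}, and let S, T ∈ ℝ^{s×s} be nonsingular. Define U = ((I − QQᵀ)X + ΔV)·S⁻¹ and P = ((I − QQᵀ)U + ΔH)·T⁻¹. Then ‖QᵀP‖ ≤ ω·(1+ω)·(ω‖X‖ + ‖ΔV‖)·‖S⁻¹‖·‖T⁻¹‖ + (1+ω)·‖ΔH‖·‖T⁻¹‖. -/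
open scoped Matrix

open scoped Matrix.Norms.L2Operator in
theorem specNorm_eq_l2_s14 {a b : ℕ} (A : Matrix (Fin a) (Fin b) ℝ) : specNorm A = ‖A‖ := rfl

open scoped Matrix.Norms.L2Operator in
theorem specNorm_mul_le_s14 {a b c : ℕ} (A : Matrix (Fin a) (Fin b) ℝ)
    (B : Matrix (Fin b) (Fin c) ℝ) : specNorm (A * B) ≤ specNorm A * specNorm B := by
  simpa only [specNorm_eq_l2_s14] using Matrix.l2_opNorm_mul A B

open scoped Matrix.Norms.L2Operator in
theorem specNorm_add_le {a b : ℕ} (A B : Matrix (Fin a) (Fin b) ℝ) :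
    specNorm (A + B) ≤ specNorm A + specNorm B := by
  simpa only [specNorm_eq_l2_s14] using norm_add_le A B

open scoped Matrix.Norms.L2Operator in
theorem stmt_14_norm_transpose {m r : ℕ} (Q : Matrix (Fin m) (Fin r) ℝ) (ω : ℝ) (hω : 0 ≤ ω)
    (hQ : specNorm (1 - Qᵀ * Q) ≤ ω) : specNorm Qᵀ ≤ 1 + ω := by
  rw [specNorm_eq_l2_s14] at *
  have ht : ‖Qᵀ‖ = ‖Q‖ := by
    rw [← Matrix.conjTranspose_eq_transpose_of_trivial, Matrix.l2_opNorm_conjTranspose]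
  have h1 : ‖(1 : Matrix (Fin r) (Fin r) ℝ)‖ ≤ 1 := by
    rw [← Matrix.diagonal_one, Matrix.l2_opNorm_diagonal]
    exact (pi_norm_le_iff_of_nonneg zero_le_one).2 fun i => by simp
  have h2 : ‖Q‖ * ‖Q‖ ≤ 1 + ω := by
    rw [← Matrix.l2_opNorm_conjTranspose_mul_self, Matrix.conjTranspose_eq_transpose_of_trivial]
    have h3 := norm_sub_le (1 : Matrix (Fin r) (Fin r) ℝ) (1 - Qᵀ * Q)
    rw [sub_sub_cancel] at h3
    linarith
  rw [ht]
  nlinarith [norm_nonneg Q]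

theorem stmt_14 (m r s : ℕ)
    (Q : Matrix (Fin m) (Fin r) ℝ) (ω : ℝ) (hω : 0 ≤ ω)
    (hQ : specNorm (1 - Qᵀ * Q) ≤ ω)
    (X ΔV ΔH : Matrix (Fin m) (Fin s) ℝ)
    (S T : Matrix (Fin s) (Fin s) ℝ) (hS : IsUnit S.det) (hT : IsUnit T.det) :
    specNorm (Qᵀ *
        (((1 - Q * Qᵀ) * (((1 - Q * Qᵀ) * X + ΔV) * S⁻¹) + ΔH) * T⁻¹)) ≤
      ω * (1 + ω) * (ω * specNorm X + specNorm ΔV) * specNorm S⁻¹ *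
          specNorm T⁻¹ +
        (1 + ω) * specNorm ΔH * specNorm T⁻¹ := by
  have key : Qᵀ * (((1 - Q * Qᵀ) * (((1 - Q * Qᵀ) * X + ΔV) * S⁻¹) + ΔH) * T⁻¹) =
      ((1 - Qᵀ * Q) * (((1 - Qᵀ * Q) * (Qᵀ * X) + Qᵀ * ΔV) * S⁻¹) + Qᵀ * ΔH) * T⁻¹ := by
    simp only [Matrix.mul_add, Matrix.add_mul, Matrix.sub_mul, Matrix.mul_sub, Matrix.one_mul,
      Matrix.mul_assoc]
  rw [key]
  have hq : specNorm Qᵀ ≤ 1 + ω := stmt_14_norm_transpose Q ω hω hQ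
  have nn : ∀ {a b : ℕ} (A : Matrix (Fin a) (Fin b) ℝ), 0 ≤ specNorm A := fun A => norm_nonneg _
  have hX : specNorm (Qᵀ * X) ≤ (1 + ω) * specNorm X :=
    (specNorm_mul_le_s14 _ _).trans (mul_le_mul_of_nonneg_right hq (nn _))
  have hV : specNorm (Qᵀ * ΔV) ≤ (1 + ω) * specNorm ΔV :=
    (specNorm_mul_le_s14 _ _).trans (mul_le_mul_of_nonneg_right hq (nn _))
  have hH : specNorm (Qᵀ * ΔH) ≤ (1 + ω) * specNorm ΔH :=
    (specNorm_mul_le_s14 _ _).trans (mul_le_mul_of_nonneg_right hq (nn _))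
  have hE : ∀ {b : ℕ} (A : Matrix (Fin r) (Fin b) ℝ),
      specNorm ((1 - Qᵀ * Q) * A) ≤ ω * specNorm A := fun A =>
    (specNorm_mul_le_s14 _ _).trans (mul_le_mul_of_nonneg_right hQ (nn _))
  have h1 : specNorm ((1 - Qᵀ * Q) * (Qᵀ * X) + Qᵀ * ΔV) ≤
      ω * ((1 + ω) * specNorm X) + (1 + ω) * specNorm ΔV :=
    (specNorm_add_le _ _).trans
      (add_le_add ((hE _).trans (mul_le_mul_of_nonneg_left hX hω)) hV)
  have h2 := (specNorm_mul_le_s14 _ S⁻¹).trans (mul_le_mul_of_nonneg_right h1 (nn S⁻¹))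
  have h3 := (specNorm_add_le _ _).trans
    (add_le_add ((hE _).trans (mul_le_mul_of_nonneg_left h2 hω)) hH)
  have h4 := (specNorm_mul_le_s14 _ T⁻¹).trans (mul_le_mul_of_nonneg_right h3 (nn T⁻¹))
  refine h4.trans (le_of_eq ?_)
  ring
end

section
/- Let Q ∈ ℝ^{m×n}. Then ‖I_m − QQᵀ‖² ≤ m + ‖I_n − QᵀQ‖_F², where ‖·‖ is the spectral norm and ‖·‖_F the Frobenius norm. -/
open scoped Matrix

/-- The Frobenius norm of a real matrix. -/
noncomputable def frobNorm {m n : Type*} [Fintype m] [Fintype n]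
    (A : Matrix m n ℝ) : ℝ :=
  Real.sqrt (∑ i, ∑ j, A i j ^ 2)

theorem specNorm_sq_le_s17 {m n : ℕ} (A : Matrix (Fin m) (Fin n) ℝ) :
    specNorm A ^ 2 ≤ ∑ i, ∑ j, A i j ^ 2 := by
  have hS : 0 ≤ ∑ i, ∑ j, A i j ^ 2 :=
    Finset.sum_nonneg fun i _ => Finset.sum_nonneg fun j _ => sq_nonneg _
  have h : specNorm A ≤ Real.sqrt (∑ i, ∑ j, A i j ^ 2) := by
    unfold specNorm
    refine ContinuousLinearMap.opNorm_le_bound _ (Real.sqrt_nonneg _) fun x => ?_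
    rw [EuclideanSpace.norm_eq, EuclideanSpace.norm_eq, ← Real.sqrt_mul hS]
    apply Real.sqrt_le_sqrt
    rw [Finset.sum_mul]
    refine Finset.sum_le_sum fun i _ => ?_
    simp only [Real.norm_eq_abs, sq_abs]
    exact Finset.sum_mul_sq_le_sq_mul_sq Finset.univ (A i) x
  calc specNorm A ^ 2 ≤ Real.sqrt (∑ i, ∑ j, A i j ^ 2) ^ 2 :=
        pow_le_pow_left₀ (norm_nonneg _) h 2
    _ = _ := Real.sq_sqrt hS

theorem sum_sq_eq_trace {m n : ℕ} (A : Matrix (Fin m) (Fin n) ℝ) :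
    ∑ i, ∑ j, A i j ^ 2 = (A * Aᵀ).trace := by
  simp [Matrix.trace, Matrix.mul_apply, sq]

theorem sum_sq_one_sub {m n : ℕ} (Q : Matrix (Fin m) (Fin n) ℝ) :
    ∑ i, ∑ j, (1 - Q * Qᵀ : Matrix (Fin m) (Fin m) ℝ) i j ^ 2
      = m - 2 * (Q * Qᵀ).trace + (Q * Qᵀ * (Q * Qᵀ)).trace := by
  rw [sum_sq_eq_trace]
  simp only [Matrix.transpose_sub, Matrix.transpose_one, Matrix.transpose_mul,
    Matrix.transpose_transpose, sub_mul, mul_sub, one_mul, mul_one, Matrix.trace_sub,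
    Matrix.trace_one, Fintype.card_fin]
  ring

theorem stmt_17 (m n : ℕ) (Q : Matrix (Fin m) (Fin n) ℝ) :
    specNorm (1 - Q * Qᵀ) ^ 2 ≤ m + frobNorm (1 - Qᵀ * Q) ^ 2 := by
  have h1 := specNorm_sq_le_s17 (1 - Q * Qᵀ)
  have h2 := sum_sq_one_sub Q
  have h3 := sum_sq_one_sub Qᵀ
  rw [Matrix.transpose_transpose] at h3
  have h4 : (Q * Qᵀ).trace = (Qᵀ * Q).trace := Matrix.trace_mul_comm _ _
  have h5 : (Q * Qᵀ * (Q * Qᵀ)).trace = (Qᵀ * Q * (Qᵀ * Q)).trace := by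
    rw [Matrix.mul_assoc, Matrix.trace_mul_comm]
    simp only [Matrix.mul_assoc]
  have h6 : frobNorm (1 - Qᵀ * Q) ^ 2 = ∑ i, ∑ j, (1 - Qᵀ * Q : Matrix (Fin n) (Fin n) ℝ) i j ^ 2 :=
    Real.sq_sqrt (Finset.sum_nonneg fun i _ => Finset.sum_nonneg fun j _ => sq_nonneg _)
  have h7 : (0 : ℝ) ≤ n := Nat.cast_nonneg n
  rw [h6]
  linarith
end
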